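/- arXiv:1508.02940 — 2 statements merged into one kernel-verified Lean document; each statement's English description precedes it below -/
import Mathlib

section
/- Let m ∈ ℤ₊ and consider the knapsack polytope P = {(x,y) ∈ [0,1]^{2m} : 2(x₁+y₁) + 2²(x₂+y₂) + … + 2^m(x_m+y_m) ≤ 2^{m+1} − 1} in dimension n = 2m. Let W, W' ∈ ℤ^{k×m} be integer matrices and let Q = conv({(x,y) ∈ P : Wx + W'y ∈ ℤ^k}). If k < m, then Q is not an integral polytope; i.e., Q ≠ conv(Q ∩ ℤ^{2m}). -/
open Matrix Set

/-- A point of `ℝᵐ × ℝᵐ` is integral if all its coordinates are integers. -/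
def IsIntegerPair {m : ℕ} (p : (Fin m → ℝ) × (Fin m → ℝ)) : Prop :=
  (∀ i, ∃ z : ℤ, p.1 i = (z : ℝ)) ∧ (∀ i, ∃ z : ℤ, p.2 i = (z : ℝ))

/-! The integer points of `P` satisfy, for every `j`, the Chvátal–Gomory inequality
`∑_{i ≥ j} 2ⁱ (xᵢ + yᵢ) ≤ 2ᵐ - 2ʲ`, so it suffices to violate one of them at a point of `P` where
`Wx + W'y` is integral. Start from points with `x + y = 1`, where all of them are tight while the
knapsack constraint has slack `1`. Among the solutions of `(W - W')a = 0`, take one of maximal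
support. Since `k < m`, the equation `(W - W')w + W's = 0` has a nonzero solution with `s` supported
in the support of `a` and `w` supported outside it, and maximality forces `s ≠ 0`. After scaling `a`
so that its nonzero entries are not integers, for small `e` the point `x = fract (a + e w)`,
`y = 1 - x + e s` lies in the unit box, and `Wx + W'y` is integral. With the right sign of `e`, some
tail sum `∑_{i ≥ j} 2ⁱ e sᵢ` is positive. -/

section Support

theorem exists_mem_forall_disjoint_support_eq_zero {ι M : Type*} [Finite ι] [AddMonoid M]
    (N : AddSubmonoid (ι → M)) :
    ∃ a ∈ N, ∀ b ∈ N, Disjoint (Function.support a) (Function.support b) → b = 0 := by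
  obtain ⟨a, haN, hmax⟩ :=
    (Set.toFinite (Function.support '' (N : Set (ι → M)))).exists_maximalFor'
      Function.support (N : Set (ι → M)) ⟨0, N.zero_mem⟩
  refine ⟨a, haN, fun b hbN hab => ?_⟩
  have hb_zero (i : ι) (hi : i ∈ Function.support a) : b i = 0 :=
    Function.notMem_support.1 (Set.disjoint_left.1 hab hi)
  have ha_sub : Function.support a ⊆ Function.support (a + b) := fun i hi => by
    simpa [hb_zero i hi] using hi
  ext i
  by_contra hbi
  have hai : a i = 0 := Function.notMem_support.1 (Set.disjoint_right.1 hab hbi)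
  have hi : i ∈ Function.support (a + b) := by simpa [hai] using hbi
  exact hmax (N.add_mem haN hbN) ha_sub hi hai

theorem exists_ne_zero_map_indicator_add_eq_zero {ι K V : Type*} [Fintype ι] [DivisionRing K]
    [AddCommGroup V] [Module K V] [FiniteDimensional K V] (A B : (ι → K) →ₗ[K] V)
    (hV : Module.finrank K V < Fintype.card ι) (S : Set ι) :
    ∃ z ≠ 0, A (Sᶜ.indicator z) + B (S.indicator z) = 0 := by
  let φ : (ι → K) →ₗ[K] V :=
    { toFun z := A (Sᶜ.indicator z) + B (S.indicator z)
      map_add' z z' := by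
        simp only [Set.indicator_add', map_add]
        abel
      map_smul' c z := by
        have hsmul (T : Set ι) : T.indicator (c • z) = c • T.indicator z :=
          Set.indicator_const_smul T c z
        simp only [hsmul, map_smul, smul_add, RingHom.id_apply] }
  have hker : LinearMap.ker φ ≠ ⊥ :=
    LinearMap.ker_ne_bot_of_finrank_lt (by rwa [Module.finrank_pi])
  obtain ⟨z, hz, hz0⟩ := (Submodule.ne_bot_iff _).1 hker
  exact ⟨z, hz0, hz⟩

theorem exists_map_eq_zero_and_map_add_map_eq_zero {ι K V : Type*} [Fintype ι] [DivisionRing K]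
    [AddCommGroup V] [Module K V] [FiniteDimensional K V] (A B : (ι → K) →ₗ[K] V)
    (hV : Module.finrank K V < Fintype.card ι) :
    ∃ a w s : ι → K, A a = 0 ∧ A w + B s = 0 ∧ s ≠ 0 ∧ ∀ i, s i = 0 ∨ (w i = 0 ∧ a i ≠ 0) := by
  obtain ⟨a, ha, hmax⟩ :=
    exists_mem_forall_disjoint_support_eq_zero (LinearMap.ker A).toAddSubmonoid
  obtain ⟨z, hz0, hz⟩ :=
    exists_ne_zero_map_indicator_add_eq_zero A B hV (Function.support a)
  refine ⟨a, _, _, ha, hz, fun hs => hz0 ?_, fun i => ?_⟩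
  · have hw : (Function.support a)ᶜ.indicator z = 0 := by
      refine hmax _ ?_ ?_
      · simpa [hs] using hz
      · exact disjoint_compl_right.mono_right Set.support_indicator_subset
    rw [← Set.indicator_compl_add_self (Function.support a) z, hw, hs, add_zero]
  · by_cases hi : a i = 0 <;> simp [hi]

end Support

section Perturbation

open Filter Topology

theorem exists_forall_fract_mul_ne_zero {ι : Type*} [Finite ι] (a : ι → ℝ) :
    ∃ c : ℝ, ∀ i, a i ≠ 0 → Int.fract (c * a i) ≠ 0 := by
  cases nonempty_fintype ι
  have hc : 0 < (‖a‖ + 1)⁻¹ := by positivity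
  refine ⟨(‖a‖ + 1)⁻¹, fun i hi hfract => ?_⟩
  have hlt : |(‖a‖ + 1)⁻¹ * a i| < 1 := by
    rw [abs_mul, abs_of_pos hc, inv_mul_lt_one₀ (by positivity)]
    exact (norm_le_pi_norm a i).trans_lt (lt_add_one _)
  obtain ⟨z, hz⟩ := Int.fract_eq_zero_iff.1 hfract
  rw [← hz] at hlt
  have hz0 : z = 0 := Int.abs_lt_one_iff.1 (by exact_mod_cast hlt)
  exact mul_ne_zero hc.ne' hi (by rw [← hz, hz0, Int.cast_zero])

theorem eventually_mul_mem_Icc_fract {a w s : ℝ} (h : s = 0 ∨ (w = 0 ∧ Int.fract a ≠ 0)) :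
    ∀ᶠ e : ℝ in 𝓝 0,
      e * s ∈ Set.Icc (Int.fract (a + e * w) - 1) (Int.fract (a + e * w)) := by
  rcases h with rfl | ⟨rfl, ha⟩
  · refine .of_forall fun e => ?_
    simp [Int.fract_nonneg, (Int.fract_lt_one _).le]
  · have hlim : Tendsto (fun e : ℝ => e * s) (𝓝 0) (𝓝 0) := by
      simpa using tendsto_id.mul_const (b := s) (x := 𝓝 (0 : ℝ))
    have hpos : 0 < Int.fract a := (Int.fract_nonneg a).lt_of_ne' ha
    have hneg : Int.fract a - 1 < 0 := sub_neg.2 (Int.fract_lt_one a)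
    simpa using hlim.eventually (Icc_mem_nhds hneg hpos)

theorem exists_ne_zero_eventually_exists_map_add_map_eq_zero {ι V : Type*} [Fintype ι]
    [AddCommGroup V] [Module ℝ V] [FiniteDimensional ℝ V] (A B : (ι → ℝ) →ₗ[ℝ] V)
    (hV : Module.finrank ℝ V < Fintype.card ι) :
    ∃ s ≠ 0, ∀ᶠ e : ℝ in 𝓝 0, ∃ u : ι → ℝ, A u + B (e • s) = 0 ∧
      ∀ i, (e • s) i ∈ Set.Icc (Int.fract (u i) - 1) (Int.fract (u i)) := by
  obtain ⟨a, w, s, ha, hws, hs0, hsupp⟩ := exists_map_eq_zero_and_map_add_map_eq_zero A B hV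
  obtain ⟨c, hc⟩ := exists_forall_fract_mul_ne_zero a
  refine ⟨s, hs0, ?_⟩
  have hbox : ∀ᶠ e : ℝ in 𝓝 0, ∀ i,
      e * s i ∈ Set.Icc (Int.fract (c * a i + e * w i) - 1) (Int.fract (c * a i + e * w i)) :=
    eventually_all.2 fun i =>
      eventually_mul_mem_Icc_fract ((hsupp i).imp_right (And.imp_right (hc i)))
  filter_upwards [hbox] with e he
  refine ⟨c • a + e • w, ?_, he⟩
  calc A (c • a + e • w) + B (e • s) = c • A a + e • (A w + B s) := by
        simp only [map_add, map_smul, smul_add, add_assoc]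
    _ = 0 := by rw [ha, hws, smul_zero, smul_zero, add_zero]

end Perturbation

section TailSums

theorem exists_sum_Ici_ne_zero {ι M : Type*} [Finite ι] [PartialOrder ι] [LocallyFiniteOrderTop ι]
    [AddCommMonoid M] {f : ι → M} (hf : f ≠ 0) : ∃ j, ∑ i ∈ Finset.Ici j, f i ≠ 0 := by
  obtain ⟨j, hj⟩ := (Set.toFinite (Function.support f)).exists_maximal
    (Function.support_nonempty_iff.2 hf)
  refine ⟨j, ?_⟩
  rw [Finset.sum_eq_single_of_mem j (Finset.mem_Ici.2 le_rfl)]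
  · exact hj.prop
  · intro i hji hij
    by_contra hi
    exact hij (hj.eq_of_ge hi (Finset.mem_Ici.1 hji))

theorem sum_univ_two_pow (R : Type*) [Ring R] (m : ℕ) :
    ∑ i : Fin m, (2 : R) ^ (i : ℕ) = 2 ^ m - 1 := by
  rw [Fin.sum_univ_eq_sum_range (fun i => (2 : R) ^ i), ← geom_sum_mul,
    show (2 : R) - 1 = 1 by norm_num, mul_one]

theorem sum_Ici_two_pow (R : Type*) [Ring R] {m : ℕ} (j : Fin m) :
    ∑ i ∈ Finset.Ici j, (2 : R) ^ (i : ℕ) = 2 ^ m - 2 ^ (j : ℕ) := by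
  have h := geom_sum_Ico_mul (2 : R) j.is_lt.le
  rwa [← Fin.map_valEmbedding_Ici, Finset.sum_map,
    show (2 : R) - 1 = 1 by norm_num, mul_one] at h

theorem sum_Ici_two_pow_mul_le {m : ℕ} {z : Fin m → ℤ} (hz : 0 ≤ z)
    (hsum : ∑ i : Fin m, 2 ^ ((i : ℕ) + 1) * z i ≤ 2 ^ (m + 1) - 1) (j : Fin m) :
    ∑ i ∈ Finset.Ici j, 2 ^ (i : ℕ) * z i ≤ 2 ^ m - 2 ^ (j : ℕ) := by
  set S := ∑ i ∈ Finset.Ici j, 2 ^ (i : ℕ) * z i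
  have hS_lt : S < 2 ^ m := by
    have hS_le : 2 * S ≤ 2 ^ (m + 1) - 1 := calc
      2 * S ≤ 2 * ∑ i : Fin m, 2 ^ (i : ℕ) * z i := by
        gcongr
        exact Finset.sum_le_univ_sum_of_nonneg fun i => mul_nonneg (by positivity) (hz i)
      _ = ∑ i : Fin m, 2 ^ ((i : ℕ) + 1) * z i := by
        rw [Finset.mul_sum]
        exact Finset.sum_congr rfl fun i _ => by ring
      _ ≤ 2 ^ (m + 1) - 1 := hsum
    rw [pow_succ] at hS_le
    lia
  have hS_dvd : 2 ^ (j : ℕ) ∣ S := Finset.dvd_sum fun i hi =>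
    (pow_dvd_pow 2 (Fin.le_def.1 (Finset.mem_Ici.1 hi))).mul_right _
  have hdvd : 2 ^ (j : ℕ) ∣ 2 ^ m - S := (pow_dvd_pow 2 j.is_lt.le).sub hS_dvd
  have hle : 2 ^ (j : ℕ) ≤ 2 ^ m - S := Int.le_of_dvd (sub_pos.2 hS_lt) hdvd
  lia

end TailSums

section Knapsack

open Filter Topology

variable {m : ℕ}

/-- The knapsack polytope `P`. Coordinates are indexed from `0`, so that the weight of the pair
`(xᵢ, yᵢ)` is `2 ^ (i + 1)`. -/
def knapsackPolytope (m : ℕ) : Set ((Fin m → ℝ) × (Fin m → ℝ)) :=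
  {p | (∀ i, 0 ≤ p.1 i ∧ p.1 i ≤ 1) ∧ (∀ i, 0 ≤ p.2 i ∧ p.2 i ≤ 1) ∧
    ∑ i : Fin m, (2 : ℝ) ^ ((i : ℕ) + 1) * (p.1 i + p.2 i) ≤ 2 ^ (m + 1) - 1}

/-- Half the part of the knapsack weight carried by the coordinates `i ≥ j`: the left-hand side of
the Chvátal–Gomory inequality with index `j`. -/
noncomputable def tailWeight (j : Fin m) (p : (Fin m → ℝ) × (Fin m → ℝ)) : ℝ :=
  ∑ i ∈ Finset.Ici j, (2 : ℝ) ^ (i : ℕ) * (p.1 i + p.2 i)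

/-- The point `(x, y)` with `x = fract u` and `x + y = 1 + s`, which differs from `(u, 1 - u + s)`
by a lattice vector of the form `(b, -b)`. It serves as the point violating a Chvátal–Gomory
inequality. -/
noncomputable def fractPair {ι : Type*} (u s : ι → ℝ) : (ι → ℝ) × (ι → ℝ) :=
  (fun i => Int.fract (u i), fun i => 1 - Int.fract (u i) + s i)

theorem isLinearMap_sum_mul_add {ι R : Type*} [CommSemiring R] (t : Finset ι) (c : ι → R) :
    IsLinearMap R fun p : (ι → R) × (ι → R) => ∑ i ∈ t, c i * (p.1 i + p.2 i) where
  map_add p q := by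
    simp only [Prod.fst_add, Prod.snd_add, Pi.add_apply, ← Finset.sum_add_distrib]
    exact Finset.sum_congr rfl fun i _ => by ring
  map_smul r p := by
    simp only [Prod.smul_fst, Prod.smul_snd, Pi.smul_apply, smul_eq_mul, ← mul_add,
      Finset.mul_sum, mul_left_comm]

theorem convex_knapsackPolytope (m : ℕ) : Convex ℝ (knapsackPolytope m) := by
  have hbox : Convex ℝ (Set.Icc (0 : (Fin m → ℝ) × (Fin m → ℝ)) 1) := convex_Icc 0 1
  have hhalf := convex_halfSpace_le
    (isLinearMap_sum_mul_add Finset.univ fun i : Fin m => (2 : ℝ) ^ ((i : ℕ) + 1)) (2 ^ (m + 1) - 1)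
  convert hbox.inter hhalf using 1
  ext p
  simp only [knapsackPolytope, Set.mem_ofPred_eq, Set.mem_inter_iff, Set.mem_Icc, Prod.le_def,
    Pi.le_def, forall_and]
  tauto

theorem tailWeight_le_of_isIntegerPair {p : (Fin m → ℝ) × (Fin m → ℝ)}
    (hp : p ∈ knapsackPolytope m) (hint : IsIntegerPair p) (j : Fin m) :
    tailWeight j p ≤ 2 ^ m - 2 ^ (j : ℕ) := by
  obtain ⟨hx, hy, hsum⟩ := hp
  choose u hu using hint.1
  choose v hv using hint.2
  simp only [hu, hv] at hx hy hsum
  simp only [tailWeight, hu, hv]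
  have hnonneg : 0 ≤ u + v := fun i =>
    add_nonneg (by exact_mod_cast (hx i).1) (by exact_mod_cast (hy i).1)
  exact_mod_cast sum_Ici_two_pow_mul_le hnonneg (by exact_mod_cast hsum) j

theorem convexHull_ne_convexHull_inter_integerPair {S : Set ((Fin m → ℝ) × (Fin m → ℝ))}
    (hS : S ⊆ knapsackPolytope m) {p : (Fin m → ℝ) × (Fin m → ℝ)} (hp : p ∈ S) {j : Fin m}
    (hj : 2 ^ m - 2 ^ (j : ℕ) < tailWeight j p) :
    convexHull ℝ S ≠ convexHull ℝ (convexHull ℝ S ∩ {q | IsIntegerPair q}) := by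
  intro heq
  have hconvex : Convex ℝ {q | tailWeight j q ≤ 2 ^ m - 2 ^ (j : ℕ)} :=
    convex_halfSpace_le (isLinearMap_sum_mul_add _ _) _
  have hinteger :
      convexHull ℝ S ∩ {q | IsIntegerPair q} ⊆ {q | tailWeight j q ≤ 2 ^ m - 2 ^ (j : ℕ)} :=
    fun q hq => tailWeight_le_of_isIntegerPair
      (convexHull_min hS (convex_knapsackPolytope m) hq.1) hq.2 j
  have hp_hull : p ∈ convexHull ℝ (convexHull ℝ S ∩ {q | IsIntegerPair q}) :=
    heq ▸ subset_convexHull ℝ S hp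
  exact hj.not_ge (convexHull_min hinteger hconvex hp_hull)

theorem fractPair_mem_knapsackPolytope {u s : Fin m → ℝ}
    (hs : ∀ i, s i ∈ Set.Icc (Int.fract (u i) - 1) (Int.fract (u i)))
    (hsum : ∑ i : Fin m, 2 ^ ((i : ℕ) + 1) * s i ≤ 1) :
    fractPair u s ∈ knapsackPolytope m := by
  refine ⟨fun i => ⟨Int.fract_nonneg _, (Int.fract_lt_one _).le⟩, fun i => ?_, ?_⟩
  · obtain ⟨hlower, hupper⟩ := hs i
    constructor <;> simp only [fractPair] <;> linarith
  · calc ∑ i : Fin m, (2 : ℝ) ^ ((i : ℕ) + 1) * ((fractPair u s).1 i + (fractPair u s).2 i)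
        = 2 * ∑ i : Fin m, (2 : ℝ) ^ (i : ℕ) + ∑ i : Fin m, 2 ^ ((i : ℕ) + 1) * s i := by
          rw [Finset.mul_sum, ← Finset.sum_add_distrib]
          exact Finset.sum_congr rfl fun i _ => by simp only [fractPair]; ring
      _ ≤ 2 * (2 ^ m - 1) + 1 := by rw [sum_univ_two_pow]; gcongr
      _ = 2 ^ (m + 1) - 1 := by ring

theorem tailWeight_fractPair (u s : Fin m → ℝ) (j : Fin m) :
    tailWeight j (fractPair u s) =
      2 ^ m - 2 ^ (j : ℕ) + ∑ i ∈ Finset.Ici j, 2 ^ (i : ℕ) * s i := by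
  rw [← sum_Ici_two_pow, tailWeight, ← Finset.sum_add_distrib]
  exact Finset.sum_congr rfl fun i _ => by simp only [fractPair]; ring

theorem exists_int_eq_sum_mul_fractPair {ι : Type*} [Fintype ι] (c c' : ι → ℤ) {u s : ι → ℝ}
    (h : ∑ i, ((c i : ℝ) - c' i) * u i + ∑ i, (c' i : ℝ) * s i = 0) :
    ∃ z : ℤ, ∑ i, (c i : ℝ) * (fractPair u s).1 i + ∑ i, (c' i : ℝ) * (fractPair u s).2 i = z := by
  refine ⟨∑ i, (c' i - (c i - c' i) * ⌊u i⌋), ?_⟩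
  calc _ = ∑ i, ((c' i : ℝ) - (c i - c' i) * ⌊u i⌋) +
        (∑ i, ((c i : ℝ) - c' i) * u i + ∑ i, (c' i : ℝ) * s i) := by
        simp only [← Finset.sum_add_distrib]
        exact Finset.sum_congr rfl fun i _ => by simp only [fractPair, Int.fract]; ring
    _ = _ := by rw [h, add_zero]; push_cast; rfl

theorem exists_mem_knapsackPolytope_lt_tailWeight {k : ℕ} (W W' : Matrix (Fin k) (Fin m) ℤ)
    (hkm : k < m) :
    ∃ p ∈ knapsackPolytope m,
      (∀ r, ∃ z : ℤ, ∑ i, (W r i : ℝ) * p.1 i + ∑ i, (W' r i : ℝ) * p.2 i = z) ∧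
      ∃ j : Fin m, 2 ^ m - 2 ^ (j : ℕ) < tailWeight j p := by
  obtain ⟨s, hs0, hs⟩ := exists_ne_zero_eventually_exists_map_add_map_eq_zero
    (Matrix.mulVecLin (.of fun r i => (W r i : ℝ) - W' r i))
    (Matrix.mulVecLin (.of fun r i => (W' r i : ℝ))) (by simpa using hkm)
  obtain ⟨j, hj⟩ : ∃ j : Fin m, ∑ i ∈ Finset.Ici j, (2 : ℝ) ^ (i : ℕ) * s i ≠ 0 := by
    refine exists_sum_Ici_ne_zero fun h => hs0 (funext fun i => ?_)
    simpa using congrFun h i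
  set τ := ∑ i ∈ Finset.Ici j, (2 : ℝ) ^ (i : ℕ) * s i
  have hweight : ∀ᶠ e : ℝ in 𝓝 0, ∑ i : Fin m, 2 ^ ((i : ℕ) + 1) * (e • s) i ≤ 1 := by
    have hcont : Continuous fun e : ℝ => ∑ i : Fin m, 2 ^ ((i : ℕ) + 1) * (e • s) i := by
      simp only [Pi.smul_apply]
      fun_prop
    exact (hcont.tendsto 0).eventually (Iic_mem_nhds (by simp))
  -- Scaling `s` by a positive multiple of `τ` makes the tail sum positive whatever the sign of `τ`.
  have hscale : Tendsto (fun δ : ℝ => δ * τ) (𝓝[>] 0) (𝓝 0) := by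
    simpa using (tendsto_id.mul_const τ).mono_left (nhdsWithin_le_nhds (a := (0 : ℝ)))
  obtain ⟨δ, ⟨⟨u, hu, hbox⟩, hsum⟩, hδ⟩ :=
    ((hscale.eventually (hs.and hweight)).and self_mem_nhdsWithin).exists
  refine ⟨fractPair u ((δ * τ) • s), fractPair_mem_knapsackPolytope hbox hsum,
    fun r => exists_int_eq_sum_mul_fractPair _ _ (congrFun hu r), j, ?_⟩
  have htail : ∑ i ∈ Finset.Ici j, (2 : ℝ) ^ (i : ℕ) * ((δ * τ) • s) i = δ * τ ^ 2 := by
    simp only [Pi.smul_apply, smul_eq_mul, mul_left_comm _ (δ * τ), ← Finset.mul_sum]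
    ring
  rw [tailWeight_fractPair, htail]
  exact lt_add_of_pos_right _ (mul_pos hδ (by positivity))

end Knapsack

/-- **Lower bound: at least `m` integrality constraints are needed for the knapsack
polytope** `P = {(x,y) ∈ [0,1]^{2m} : ∑ᵢ 2ⁱ(xᵢ+yᵢ) ≤ 2^{m+1} - 1}`. For any integral
`W, W' ∈ ℤ^{k×m}` with `k < m`, the set `Q = conv {(x,y) ∈ P : Wx + W'y ∈ ℤᵏ}` is not
an integral polytope. -/
theorem knapsack_lower_bound_on_integrality_constraints
    (m k : ℕ) (W W' : Matrix (Fin k) (Fin m) ℤ) (hkm : k < m) :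
    convexHull ℝ {p : (Fin m → ℝ) × (Fin m → ℝ) |
        ((∀ i, 0 ≤ p.1 i ∧ p.1 i ≤ 1) ∧ (∀ i, 0 ≤ p.2 i ∧ p.2 i ≤ 1) ∧
          ∑ i : Fin m, (2 : ℝ) ^ ((i : ℕ) + 1) * (p.1 i + p.2 i)
            ≤ 2 ^ (m + 1) - 1) ∧
        (∀ j : Fin k, ∃ z : ℤ,
          (∑ i, (W j i : ℝ) * p.1 i) + (∑ i, (W' j i : ℝ) * p.2 i) = (z : ℝ))}
      ≠ convexHull ℝ ((convexHull ℝ {p : (Fin m → ℝ) × (Fin m → ℝ) |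
        ((∀ i, 0 ≤ p.1 i ∧ p.1 i ≤ 1) ∧ (∀ i, 0 ≤ p.2 i ∧ p.2 i ≤ 1) ∧
          ∑ i : Fin m, (2 : ℝ) ^ ((i : ℕ) + 1) * (p.1 i + p.2 i)
            ≤ 2 ^ (m + 1) - 1) ∧
        (∀ j : Fin k, ∃ z : ℤ,
          (∑ i, (W j i : ℝ) * p.1 i) + (∑ i, (W' j i : ℝ) * p.2 i) = (z : ℝ))})
        ∩ {p | IsIntegerPair p}) := by
  obtain ⟨p, hp, hWp, j, hj⟩ := exists_mem_knapsackPolytope_lt_tailWeight W W' hkm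
  exact convexHull_ne_convexHull_inter_integerPair (fun _ hq => hq.1) ⟨hp, hWp⟩ hj
end

section
/- Let n ≥ 4, a ∈ ℤ^n, b ∈ ℤ, and P = {x ∈ [0,1]^n : a^T x ≤ b}. Then there exists an integer matrix W ∈ ℤ^{(n−2)×n} such that conv(P ∩ ℤ^n) = conv({x ∈ P : Wx ∈ ℤ^{n−2}}). That is, every 0-1 knapsack polytope can be modeled, using only the original knapsack inequality and the 0-1 variable bounds, with at most n−2 integrality constraints. -/
/-! Among the hyperplanes `c ⬝ᵥ y = β` which separate the feasible from the infeasible vertices of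
the cube, every vertex at margin at least `m`, choose `(c, β)` as a basic point of the polyhedron
of all such pairs. Then at least `n + 1 ≥ 5` vertices lie on the two hyperplanes `c ⬝ᵥ y = β ± m`,
so three of them, `p`, `q` and `r`, have the same value of `c`. The vectors `p - q` and `p - r`
have a `2 × 2` minor equal to `±1`, hence there is `W` with `n - 2` rows such that integrality of
`W x` forces `x ∈ ℤⁿ + ℝ (p - q) + ℝ (p - r)`. Any such plane is triangulated by lattice triangles
whose edges `±(p - q)`, `±(p - r)`, `±(q - r)` have entries in `{-1, 0, 1}`, so if a point `x` of
the cube lies in the relative interior of a face of this triangulation, then the vertices of that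
face are themselves cube vertices. As `c` is constant on the plane, these vertices are all feasible
or all infeasible; if `x` satisfies the knapsack inequality, one of them does, and hence all do.
-/

open Matrix Set

/-- A point of `ℝⁿ` is integral if all its coordinates are integers. -/
def IsIntegerPoint {n : ℕ} (x : Fin n → ℝ) : Prop := ∀ i, ∃ z : ℤ, x i = (z : ℝ)

open scoped Topology

section BasicFeasiblePoint

variable {𝕜 E J : Type*} [Field 𝕜] [AddCommGroup E] [Module 𝕜 E] [Finite J]

theorem finrank_le_ncard_of_forall_eq_zero {g : J → Module.Dual 𝕜 E} {T : Set J}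
    (hT : ∀ v, (∀ j ∈ T, g j v = 0) → v = 0) : Module.finrank 𝕜 E ≤ T.ncard := by
  have : Fintype T := Fintype.ofFinite T
  let restrict : E →ₗ[𝕜] T → 𝕜 := LinearMap.pi fun j ↦ g j
  have hinj : Function.Injective restrict :=
    (injective_iff_map_eq_zero restrict).2 fun v hv ↦ hT v fun j hj ↦ congrFun hv ⟨j, hj⟩
  simpa [Module.finrank_fintype_fun_eq_card, ← Nat.card_eq_fintype_card] using
    LinearMap.finrank_le_finrank_of_injective hinj

variable [LinearOrder 𝕜] [IsStrictOrderedRing 𝕜] {g : J → Module.Dual 𝕜 E} {b : J → 𝕜}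

theorem exists_feasible_tight_ssubset {w v : E} (hw : ∀ j, b j ≤ g j w)
    (hv : ∀ j, g j w = b j → g j v = 0) (hneg : ∃ j, g j v < 0) :
    ∃ w', (∀ j, b j ≤ g j w') ∧ {j | g j w = b j} ⊂ {j | g j w' = b j} := by
  -- Ratio test: `j₀` is the first constraint to become tight on the ray from `w` in direction `v`.
  obtain ⟨j₀, hj₀ : g j₀ v < 0, hmin⟩ := Set.exists_min_image {j | g j v < 0}
    (fun j ↦ (g j w - b j) / -g j v) (Set.toFinite _) hneg
  set τ := (g j₀ w - b j₀) / -g j₀ v with hτ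
  have hτ₀ : 0 ≤ τ := div_nonneg (sub_nonneg.2 (hw j₀)) (neg_nonneg.2 hj₀.le)
  have hval (j : J) : g j (w + τ • v) = g j w + τ * g j v := by simp
  refine ⟨w + τ • v, fun j ↦ ?_, fun j hj ↦ ?_, fun hsub ↦ ?_⟩
  · rw [hval]
    rcases lt_or_ge (g j v) 0 with hj | hj
    · have := (le_div_iff₀ (neg_pos.2 hj)).1 (hmin j hj)
      linarith
    · linarith [hw j, mul_nonneg hτ₀ hj]
  · simpa [hval, hv j hj] using hj
  · have htight : g j₀ (w + τ • v) = b j₀ := by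
      rw [hval, hτ]
      field_simp [hj₀.ne]
      ring
    exact hj₀.ne (hv j₀ (hsub htight))

theorem exists_basic_feasible (hne : ∃ w, ∀ j, b j ≤ g j w)
    (hg : ∀ v, (∀ j, g j v = 0) → v = 0) :
    ∃ w, (∀ j, b j ≤ g j w) ∧ ∀ v, (∀ j, g j w = b j → g j v = 0) → v = 0 := by
  obtain ⟨w, hw, hmax⟩ := Set.Finite.exists_maximalFor' (fun w ↦ {j | g j w = b j})
    {w | ∀ j, b j ≤ g j w} (Set.toFinite _) hne
  refine ⟨w, hw, fun v hv ↦ by_contra fun hv₀ ↦ ?_⟩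
  obtain ⟨j, hj⟩ : ∃ j, g j v ≠ 0 := by
    by_contra! h
    exact hv₀ (hg v h)
  obtain ⟨u, hu, hneg⟩ : ∃ u, (∀ j, g j w = b j → g j u = 0) ∧ ∃ j, g j u < 0 := by
    rcases hj.lt_or_gt with hj | hj
    · exact ⟨v, hv, j, hj⟩
    · exact ⟨-v, fun j hj ↦ by simp [hv j hj], j, by simpa using hj⟩
  obtain ⟨w', hw', hss⟩ := exists_feasible_tight_ssubset hw hu hneg
  exact hss.not_subset (hmax hw' hss.subset)

theorem exists_margin_support {ι : Type*} [Fintype ι] {p : J → ι → 𝕜} {σ : J → 𝕜} {m : 𝕜}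
    (hσ : ∀ j, σ j ≠ 0) (hp : ∀ c β, (∀ j, c ⬝ᵥ p j = β) → c = 0 ∧ β = 0)
    (hsep : ∃ c β, ∀ j, m ≤ σ j * (c ⬝ᵥ p j - β)) :
    ∃ c β, (∀ j, m ≤ σ j * (c ⬝ᵥ p j - β)) ∧
      Fintype.card ι + 1 ≤ {j | σ j * (c ⬝ᵥ p j - β) = m}.ncard := by
  let g (j : J) : Module.Dual 𝕜 ((ι → 𝕜) × 𝕜) :=
    σ j • ((dotProductBilin 𝕜 𝕜).flip (p j) ∘ₗ LinearMap.fst 𝕜 _ _ - LinearMap.snd 𝕜 _ _)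
  have hg (j : J) (c : ι → 𝕜) (β : 𝕜) : g j (c, β) = σ j * (c ⬝ᵥ p j - β) := by simp [g]
  have hpointed (v) (hv : ∀ j, g j v = 0) : v = 0 := by
    obtain ⟨c, β⟩ := v
    have := hp c β fun j ↦ by simpa [hg, hσ, sub_eq_zero] using hv j
    simpa using this
  obtain ⟨a, α, ha⟩ := hsep
  obtain ⟨⟨c, β⟩, hfeas, hbasic⟩ := exists_basic_feasible (g := g) (b := fun _ ↦ m)
    ⟨(a, α), fun j ↦ by simpa only [hg] using ha j⟩ hpointed
  refine ⟨c, β, fun j ↦ hg j c β ▸ hfeas j, ?_⟩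
  simpa [hg] using finrank_le_ncard_of_forall_eq_zero (T := {j | g j (c, β) = m}) hbasic

end BasicFeasiblePoint

variable {ι : Type*}

/-- The inclusion `ℤ^ι ⊆ ℝ^ι`, as a homomorphism of additive groups. -/
def castVec : (ι → ℤ) →+ (ι → ℝ) := (Int.castAddHom ℝ).compLeft ι

@[simp]
theorem castVec_apply (z : ι → ℤ) (i : ι) : castVec z i = z i := rfl

@[simp]
theorem castVec_one : castVec (1 : ι → ℤ) = 1 := funext fun _ ↦ Int.cast_one

section Separation

variable [Fintype ι]

theorem exists_margin_of_finite {J : Type*} [Finite J] (f : J → ℝ) (b : ℝ) :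
    ∃ δ > 0, ∀ j, b < f j → b + δ ≤ f j := by
  have h (j : J) : ∀ᶠ δ in 𝓝[>] (0 : ℝ), b < f j → b + δ ≤ f j := by
    by_cases hj : b < f j
    · filter_upwards [Ioo_mem_nhdsGT (sub_pos.2 hj)] with δ hδ _
      linarith [hδ.2]
    · simp [hj]
  obtain ⟨δ, hδ, hδ₀⟩ := ((Filter.eventually_all.2 h).and self_mem_nhdsWithin).exists
  exact ⟨δ, hδ₀, hδ⟩

theorem eq_zero_of_forall_cube_dotProduct_eq {c : ι → ℝ} {β : ℝ}
    (h : ∀ y ∈ Icc (0 : ι → ℤ) 1, c ⬝ᵥ castVec y = β) : c = 0 ∧ β = 0 := by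
  classical
  have hβ : β = 0 := by simpa using (h 0 (by simp)).symm
  refine ⟨funext fun i ↦ ?_, hβ⟩
  have hi : Pi.single i 1 ∈ Icc (0 : ι → ℤ) 1 := by
    constructor <;> intro k <;> by_cases hk : k = i <;> simp [hk]
  have hcast : castVec (Pi.single i 1) = (Pi.single i 1 : ι → ℝ) := by
    ext k
    by_cases hk : k = i <;> simp [hk]
  simpa [hcast, hβ] using h _ hi

theorem exists_cube_separator_card_lt_ncard (a : ι → ℝ) (b : ℝ) :
    ∃ c β m, 0 < m ∧
      (∀ y ∈ Icc (0 : ι → ℤ) 1, a ⬝ᵥ castVec y ≤ b → c ⬝ᵥ castVec y ≤ β - m) ∧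
      (∀ y ∈ Icc (0 : ι → ℤ) 1, b < a ⬝ᵥ castVec y → β + m ≤ c ⬝ᵥ castVec y) ∧
      Fintype.card ι < {y ∈ Icc (0 : ι → ℤ) 1 |
        c ⬝ᵥ castVec y = β - m ∨ c ⬝ᵥ castVec y = β + m}.ncard := by
  classical
  obtain ⟨δ, hδ, hgap⟩ :=
    exists_margin_of_finite (fun y : Icc (0 : ι → ℤ) 1 ↦ a ⬝ᵥ castVec y.1) b
  let σ (y : Icc (0 : ι → ℤ) 1) : ℝ := if a ⬝ᵥ castVec y.1 ≤ b then -1 else 1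
  have hσ (y) : σ y ≠ 0 := by dsimp only [σ]; split_ifs <;> norm_num
  have hsep (y) : δ / 2 ≤ σ y * (a ⬝ᵥ castVec y.1 - (b + δ / 2)) := by
    dsimp only [σ]
    split_ifs with hy
    · linarith
    · linarith [hgap y (not_le.1 hy)]
  have hcube (c : ι → ℝ) (β : ℝ) (h : ∀ y : Icc (0 : ι → ℤ) 1, c ⬝ᵥ castVec y.1 = β) :
      c = 0 ∧ β = 0 := eq_zero_of_forall_cube_dotProduct_eq fun y hy ↦ h ⟨y, hy⟩
  obtain ⟨c, β, hmargin, hcard⟩ :=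
    exists_margin_support (p := fun y ↦ castVec y.1) hσ hcube ⟨a, b + δ / 2, hsep⟩
  refine ⟨c, β, δ / 2, half_pos hδ, fun y hy hle ↦ ?_, fun y hy hlt ↦ ?_,
    Nat.lt_of_succ_le (hcard.trans ?_)⟩
  · have := hmargin ⟨y, hy⟩
    rw [show σ ⟨y, hy⟩ = -1 from if_pos hle] at this
    linarith
  · have := hmargin ⟨y, hy⟩
    rw [show σ ⟨y, hy⟩ = 1 from if_neg hlt.not_ge] at this
    linarith
  · rw [← ncard_image_of_injective _ Subtype.val_injective]
    refine ncard_le_ncard ?_ ((finite_Icc _ _).subset (sep_subset _ _))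
    rintro _ ⟨y, hy : σ y * _ = _, rfl⟩
    refine ⟨y.2, ?_⟩
    dsimp only [σ] at hy
    split_ifs at hy
    · exact .inl (by linarith)
    · exact .inr (by linarith)

theorem exists_three_eq_of_four_lt_ncard {α γ : Type*} {s : Set α} {f : α → γ} {u v : γ}
    (hf : ∀ x ∈ s, f x = u ∨ f x = v) (hs : 4 < s.ncard) :
    ∃ p ∈ s, ∃ q ∈ s, ∃ r ∈ s, p ≠ q ∧ p ≠ r ∧ q ≠ r ∧ f p = f q ∧ f p = f r := by
  classical
  lift s to Finset α using finite_of_ncard_pos (by omega)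
  rw [ncard_coe_finset] at hs
  obtain ⟨w, -, hw⟩ := Finset.exists_lt_card_fiber_of_mul_lt_card_of_maps_to
    (s := s) (t := {u, v}) (f := f) (n := 2) (by simpa using hf)
    (by linarith [Finset.card_le_two (a := u) (b := v)])
  obtain ⟨p, hp, q, hq, r, hr, hpq, hpr, hqr⟩ := Finset.two_lt_card.1 hw
  rw [Finset.mem_filter] at hp hq hr
  exact ⟨p, hp.1, q, hq.1, r, hr.1, hpq, hpr, hqr, hp.2.trans hq.2.symm, hp.2.trans hr.2.symm⟩

theorem exists_cube_separator_eq_on_three (hι : 4 ≤ Fintype.card ι) (a : ι → ℝ) (b : ℝ) :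
    ∃ c β, (∀ y ∈ Icc (0 : ι → ℤ) 1, a ⬝ᵥ castVec y ≤ b ↔ c ⬝ᵥ castVec y < β) ∧
      ∃ p ∈ Icc (0 : ι → ℤ) 1, ∃ q ∈ Icc (0 : ι → ℤ) 1, ∃ r ∈ Icc (0 : ι → ℤ) 1,
        p ≠ q ∧ p ≠ r ∧ q ≠ r ∧
        c ⬝ᵥ castVec p = c ⬝ᵥ castVec q ∧ c ⬝ᵥ castVec p = c ⬝ᵥ castVec r := by
  obtain ⟨c, β, m, hm, hfeas, hinfeas, hcard⟩ := exists_cube_separator_card_lt_ncard a b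
  obtain ⟨p, hp, q, hq, r, hr, hpqr⟩ :=
    exists_three_eq_of_four_lt_ncard (fun _ hy ↦ hy.2) (hι.trans_lt hcard)
  refine ⟨c, β, fun y hy ↦ ?_, p, hp.1, q, hq.1, r, hr.1, hpqr⟩
  rcases le_or_gt (a ⬝ᵥ castVec y) b with h | h
  · exact iff_of_true h (by linarith [hfeas y hy h])
  · exact iff_of_false h.not_ge (by linarith [hinfeas y hy h])

end Separation

section SliceIntegrality

theorem le_of_le_sum_mul_of_pos {κ : Type*} [Fintype κ] {w : κ → ℝ} {k : κ → ℤ} {l : ℤ}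
    (hk : ∀ i j, k i ≤ k j + 1) (hw : ∀ j, 0 ≤ w j) (hw₁ : ∑ j, w j = 1)
    (hl : (l : ℝ) ≤ ∑ j, w j * k j) {j : κ} (hj : 0 < w j) : l ≤ k j := by
  by_contra! hlt
  have hle (i : κ) : (k i : ℝ) ≤ l := by
    exact_mod_cast (hk i j).trans hlt
  have : ∑ i, w i * k i < ∑ i, w i * l :=
    Finset.sum_lt_sum (fun i _ ↦ mul_le_mul_of_nonneg_left (hle i) (hw i))
      ⟨j, Finset.mem_univ j, mul_lt_mul_of_pos_left (Int.cast_lt.2 hlt) hj⟩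
  rw [← Finset.sum_mul, hw₁, one_mul] at this
  exact this.not_ge hl

theorem mem_Icc_of_sum_smul_mem_Icc {κ : Type*} [Fintype κ] {v : κ → ι → ℤ} {w : κ → ℝ}
    {l u : ι → ℤ} (hv : ∀ j k, v j ≤ v k + 1) (hw : ∀ j, 0 ≤ w j) (hw₁ : ∑ j, w j = 1)
    (hx : ∑ j, w j • castVec (v j) ∈ Icc (castVec l) (castVec u)) {j : κ} (hj : 0 < w j) :
    v j ∈ Icc l u := by
  refine ⟨fun i ↦ ?_, fun i ↦ ?_⟩
  · exact le_of_le_sum_mul_of_pos (fun j k ↦ hv j k i) hw hw₁ (by simpa using hx.1 i) hj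
  · refine neg_le_neg_iff.1 (le_of_le_sum_mul_of_pos (k := fun j ↦ -v j i) (fun j k ↦ ?_) hw hw₁
      (by simpa using hx.2 i) hj)
    have : v k i ≤ v j i + 1 := hv k j i
    linarith

theorem sum_smul_mem_convexHull_castVec {κ : Type*} [Fintype κ] {v : κ → ι → ℤ} {w : κ → ℝ}
    {l u : ι → ℤ} (hv : ∀ j k, v j ≤ v k + 1) (hw : ∀ j, 0 ≤ w j) (hw₁ : ∑ j, w j = 1)
    (hx : ∑ j, w j • castVec (v j) ∈ Icc (castVec l) (castVec u)) :
    ∑ j, w j • castVec (v j) ∈ convexHull ℝ (castVec '' (Icc l u ∩ range v)) := by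
  rw [← finsum_eq_sum_of_fintype]
  refine (convex_convexHull ℝ _).finsum_mem hw (by rwa [finsum_eq_sum_of_fintype]) fun j hj ↦
    subset_convexHull ℝ _ <| mem_image_of_mem _ ⟨?_, mem_range_self j⟩
  exact mem_Icc_of_sum_smul_mem_Icc hv hw hw₁ hx ((hw j).lt_of_ne' hj)

theorem mem_convexHull_slice_of_triangle [Fintype ι] {c : ι → ℝ} {z d d' l u : ι → ℤ} {x : ι → ℝ}
    {s s' : ℝ} (hd : |d| ≤ 1) (hd' : |d'| ≤ 1) (hdd' : |d - d'| ≤ 1)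
    (hc : c ⬝ᵥ castVec d = 0) (hc' : c ⬝ᵥ castVec d' = 0)
    (hs : 0 ≤ s) (hs' : 0 ≤ s') (hss' : s + s' ≤ 1)
    (hx : x ∈ Icc (castVec l) (castVec u)) (hxz : x = castVec z + s • castVec d + s' • castVec d') :
    x ∈ convexHull ℝ (castVec '' {y ∈ Icc l u | c ⬝ᵥ castVec y = c ⬝ᵥ x}) := by
  let v : Fin 3 → ι → ℤ := ![z, z + d, z + d']
  let w : Fin 3 → ℝ := ![1 - s - s', s, s']
  have hsum : ∑ j, w j • castVec (v j) = x := by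
    simp only [Fin.sum_univ_three, v, w, cons_val_zero, cons_val_one, cons_val, map_add, hxz]
    module
  have hv (j k : Fin 3) : v j ≤ v k + 1 := by
    intro i
    have h₁ := abs_le.1 (hd i)
    have h₂ := abs_le.1 (hd' i)
    have h₃ := abs_le.1 (hdd' i)
    simp only [Pi.sub_apply, Pi.one_apply] at h₁ h₂ h₃
    fin_cases j <;> fin_cases k <;>
      simp only [v, Fin.zero_eta, Fin.mk_one, Fin.reduceFinMk, cons_val_zero, cons_val_one,
        cons_val, Pi.add_apply, Pi.one_apply] <;>
      linarith
  have hcv (j : Fin 3) : c ⬝ᵥ castVec (v j) = c ⬝ᵥ x := by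
    fin_cases j <;> simp [v, hxz, hc, hc', dotProduct_add]
  have hw (j : Fin 3) : 0 ≤ w j := by
    fin_cases j
    exacts [show 0 ≤ 1 - s - s' by linarith, hs, hs']
  have hw₁ : ∑ j, w j = 1 := by
    simp only [Fin.sum_univ_three, w, cons_val]
    ring
  rw [← hsum] at hx
  have hmem := sum_smul_mem_convexHull_castVec hv hw hw₁ hx
  rw [hsum] at hmem
  refine convexHull_mono (image_mono ?_) hmem
  rintro _ ⟨hy, j, rfl⟩
  exact ⟨hy, hcv j⟩

theorem mem_convexHull_slice [Fintype ι] {c : ι → ℝ} {z d d' l u : ι → ℤ} {x : ι → ℝ}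
    {s s' : ℝ} (hd : |d| ≤ 1) (hd' : |d'| ≤ 1) (hdd' : |d - d'| ≤ 1)
    (hc : c ⬝ᵥ castVec d = 0) (hc' : c ⬝ᵥ castVec d' = 0)
    (hx : x ∈ Icc (castVec l) (castVec u)) (hxz : x = castVec z + s • castVec d + s' • castVec d') :
    x ∈ convexHull ℝ (castVec '' {y ∈ Icc l u | c ⬝ᵥ castVec y = c ⬝ᵥ x}) := by
  let z₀ : ι → ℤ := z + ⌊s⌋ • d + ⌊s'⌋ • d'
  have hxz₀ : x = castVec z₀ + Int.fract s • castVec d + Int.fract s' • castVec d' := by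
    simp only [hxz, z₀, Int.fract, map_add, map_zsmul]
    module
  rcases le_total (Int.fract s + Int.fract s') 1 with h | h
  · exact mem_convexHull_slice_of_triangle hd hd' hdd' hc hc' (Int.fract_nonneg s)
      (Int.fract_nonneg s') h hx hxz₀
  -- Otherwise `x` lies in the opposite half of the parallelogram, with corner `z₀ + d + d'`.
  · refine mem_convexHull_slice_of_triangle (z := z₀ + d + d') (d := -d) (d' := -d')
      (s := 1 - Int.fract s) (s' := 1 - Int.fract s') (by rwa [abs_neg]) (by rwa [abs_neg])
      (by rwa [← neg_sub', abs_neg]) (by simp [hc]) (by simp [hc'])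
      (sub_nonneg.2 (Int.fract_lt_one s).le) (sub_nonneg.2 (Int.fract_lt_one s').le)
      (by linarith) hx ?_
    rw [hxz₀]
    simp only [map_add, map_neg]
    module

end SliceIntegrality

section LatticeComplement

theorem exists_intMatrix_of_isUnit_minor [Fintype ι] {κ μ : Type*} [Fintype κ] [DecidableEq κ]
    [Fintype μ] {D : Matrix ι κ ℤ} {t : κ → ι} (hD : IsUnit (D.submatrix t id).det)
    (hμ : Fintype.card μ + Fintype.card κ = Fintype.card ι) :
    ∃ W : Matrix μ ι ℤ, ∀ x y, W.map Int.cast *ᵥ x = castVec y →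
      ∃ z s, x = castVec z + D.map Int.cast *ᵥ s := by
  classical
  let R : Matrix κ ι ℤ := (D.submatrix t id)⁻¹ * (1 : Matrix ι ι ℤ).submatrix t id
  let P : Matrix ι ι ℤ := 1 - D * R
  have hP (k : κ) : P (t k) = 0 := by
    have hsub : (D * R).submatrix t id = (1 : Matrix ι ι ℤ).submatrix t id := by
      rw [submatrix_mul D R t id id Function.bijective_id, submatrix_id_id,
        mul_nonsing_inv_cancel_left _ _ hD]
    exact sub_eq_zero.2 (congrFun hsub k).symm
  have ht : Function.Injective t := by
    intro k l hkl
    by_contra hne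
    rw [det_zero_of_row_eq hne (congrArg D hkl)] at hD
    exact not_isUnit_zero hD
  have e : μ ≃ ((range t)ᶜ : Set ι) := Fintype.equivOfCardEq <| by
    rw [Fintype.card_compl_set, Set.card_range_of_injective ht]
    omega
  refine ⟨P.submatrix (fun j ↦ e j) id, fun x y hy ↦ ?_⟩
  have hint (i : ι) : ∃ z : ℤ, (P.map Int.cast *ᵥ x) i = z := by
    by_cases hi : i ∈ range t
    · obtain ⟨k, rfl⟩ := hi
      exact ⟨0, by simp [mulVec, dotProduct, hP]⟩
    · refine ⟨y (e.symm ⟨i, hi⟩), ?_⟩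
      simpa [mulVec, dotProduct] using congrFun hy (e.symm ⟨i, hi⟩)
  choose z hz using hint
  refine ⟨z, R.map Int.cast *ᵥ x, ?_⟩
  have hz : castVec z = P.map Int.cast *ᵥ x := funext fun i ↦ (hz i).symm
  have hmap : P.map ((↑) : ℤ → ℝ) = 1 - D.map ((↑) : ℤ → ℝ) * R.map ((↑) : ℤ → ℝ) := by
    ext
    simp [P, mul_apply, one_apply, apply_ite]
  rw [hz, hmap, sub_mulVec, one_mulVec, mulVec_mulVec, sub_add_cancel]

end LatticeComplement

section Knapsack

theorem isUnit_sub_of_mem_Icc_zero_one {x y : ℤ} (hx : x ∈ Icc 0 1) (hy : y ∈ Icc 0 1)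
    (hxy : x ≠ y) : IsUnit (x - y) := by
  rw [Int.isUnit_iff]
  grind

theorem abs_sub_le_one_of_mem_cube {p q : ι → ℤ} (hp : p ∈ Icc 0 1) (hq : q ∈ Icc 0 1) :
    |p - q| ≤ 1 :=
  abs_le'.2 ⟨(sub_le_self p hq.1).trans hp.2, (neg_sub p q).trans_le <|
    (sub_le_self q hp.1).trans hq.2⟩

theorem exists_isUnit_minor_of_mem_cube {p q r : ι → ℤ} (hp : p ∈ Icc 0 1) (hq : q ∈ Icc 0 1)
    (hr : r ∈ Icc 0 1) (hpq : p ≠ q) (hpr : p ≠ r) (hqr : q ≠ r) :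
    ∃ t u, IsUnit ((p - q) t * (p - r) u - (p - r) t * (p - q) u) := by
  have hbit {y : ι → ℤ} (hy : y ∈ Icc 0 1) (i : ι) : y i ∈ Icc 0 1 := ⟨hy.1 i, hy.2 i⟩
  have hunit {x y : ι → ℤ} (hx : x ∈ Icc 0 1) (hy : y ∈ Icc 0 1) {i : ι} (hxy : x i ≠ y i) :
      IsUnit (x i - y i) :=
    isUnit_sub_of_mem_Icc_zero_one (hbit hx i) (hbit hy i) hxy
  obtain ⟨t, ht⟩ := Function.ne_iff.1 hpq
  -- A bit takes two values, so at `t` the point `r` agrees with either `q` or `p`.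
  have hr_t : q t = r t ∨ p t = r t := by
    grind [hbit hp t, hbit hq t, hbit hr t]
  rcases hr_t with h | h
  · obtain ⟨u, hu⟩ := Function.ne_iff.1 hqr
    refine ⟨t, u, ?_⟩
    convert (hunit hp hq ht).mul (hunit hq hr hu) using 1
    simp only [Pi.sub_apply, ← h]
    ring
  · obtain ⟨u, hu⟩ := Function.ne_iff.1 hpr
    refine ⟨t, u, ?_⟩
    convert (hunit hp hq ht).mul (hunit hp hr hu) using 1
    simp [h]

variable [Fintype ι]

theorem exists_intMatrix_forall_mem_convexHull_slice {μ : Type*} [Fintype μ]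
    {p q r : ι → ℤ} (hp : p ∈ Icc 0 1) (hq : q ∈ Icc 0 1) (hr : r ∈ Icc 0 1)
    (hpq : p ≠ q) (hpr : p ≠ r) (hqr : q ≠ r) {c : ι → ℝ}
    (hcq : c ⬝ᵥ castVec p = c ⬝ᵥ castVec q) (hcr : c ⬝ᵥ castVec p = c ⬝ᵥ castVec r)
    (hμ : Fintype.card μ + 2 = Fintype.card ι) :
    ∃ W : Matrix μ ι ℤ, ∀ x ∈ Icc (0 : ι → ℝ) 1, ∀ y, W.map Int.cast *ᵥ x = castVec y →
      x ∈ convexHull ℝ (castVec '' {y ∈ Icc 0 1 | c ⬝ᵥ castVec y = c ⬝ᵥ x}) := by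
  classical
  obtain ⟨t, u, htu⟩ := exists_isUnit_minor_of_mem_cube hp hq hr hpq hpr hqr
  let D : Matrix ι (Fin 2) ℤ := of fun i ↦ ![(p - q) i, (p - r) i]
  have hD : IsUnit (D.submatrix ![t, u] id).det := by
    rw [det_fin_two]
    simpa [D] using htu
  obtain ⟨W, hW⟩ := exists_intMatrix_of_isUnit_minor (μ := μ) hD (by simpa using hμ)
  refine ⟨W, fun x hx y hy ↦ ?_⟩
  obtain ⟨z, s, hxz⟩ := hW x y hy
  refine mem_convexHull_slice (z := z) (s := s 0) (s' := s 1) (abs_sub_le_one_of_mem_cube hp hq)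
    (abs_sub_le_one_of_mem_cube hp hr)
    (by rw [sub_sub_sub_cancel_left]; exact abs_sub_le_one_of_mem_cube hr hq)
    (by simp [dotProduct_sub, hcq]) (by simp [dotProduct_sub, hcr]) (by simpa using hx) ?_
  rw [hxz]
  ext i
  simp only [D, mulVec, dotProduct, Fin.sum_univ_two, map_apply, of_apply, cons_val_zero,
    cons_val_one, cons_val_fin_one, Pi.add_apply, Pi.sub_apply, Pi.smul_apply, smul_eq_mul,
    map_sub, castVec_apply, Int.cast_sub]
  ring

theorem mem_convexHull_feasible_of_mem_slice {V : Set (ι → ℤ)} {a c x : ι → ℝ} {b β : ℝ}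
    (hsep : ∀ y ∈ V, a ⬝ᵥ castVec y ≤ b ↔ c ⬝ᵥ castVec y < β) (hax : a ⬝ᵥ x ≤ b)
    (hx : x ∈ convexHull ℝ (castVec '' {y ∈ V | c ⬝ᵥ castVec y = c ⬝ᵥ x})) :
    x ∈ convexHull ℝ (castVec '' {y ∈ V | a ⬝ᵥ castVec y ≤ b}) := by
  have hconc : ConcaveOn ℝ univ (a ⬝ᵥ ·) := (dotProductBilin ℝ ℝ a).concaveOn convex_univ
  obtain ⟨_, ⟨y, ⟨hyV, hcy⟩, rfl⟩, hay⟩ := hconc.exists_le_of_mem_convexHull (subset_univ _) hx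
  have hcx : c ⬝ᵥ x < β := hcy ▸ (hsep y hyV).1 (hay.trans hax)
  refine convexHull_mono (image_mono fun y hy ↦ ?_) hx
  exact ⟨hy.1, (hsep y hy.1).2 (hy.2.trans_lt hcx)⟩

end Knapsack

theorem knapsack_upper_bound_n_minus_two_integrality_constraints_general
    (n : ℕ) (hn : 4 ≤ n) (a : Fin n → ℝ) (b : ℝ) :
    ∃ W : Matrix (Fin (n - 2)) (Fin n) ℤ,
      convexHull ℝ {x : Fin n → ℝ |
          ((∀ i, 0 ≤ x i ∧ x i ≤ 1) ∧ ∑ i, a i * x i ≤ b) ∧ IsIntegerPoint x}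
        = convexHull ℝ {x : Fin n → ℝ |
          ((∀ i, 0 ≤ x i ∧ x i ≤ 1) ∧ ∑ i, a i * x i ≤ b) ∧
          (∀ j, ∃ z : ℤ, (W.map (Int.cast : ℤ → ℝ)).mulVec x j = (z : ℝ))} := by
  obtain ⟨c, β, hsep, p, hp, q, hq, r, hr, hpq, hpr, hqr, hcq, hcr⟩ :=
    exists_cube_separator_eq_on_three (by simpa using hn) a b
  obtain ⟨W, hW⟩ := exists_intMatrix_forall_mem_convexHull_slice (μ := Fin (n - 2))
    hp hq hr hpq hpr hqr hcq hcr (by simp; omega)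
  refine ⟨W, (convexHull_mono ?_).antisymm (convexHull_min ?_ (convex_convexHull ℝ _))⟩
  · rintro x ⟨hxP, hx⟩
    choose z hz using hx
    obtain rfl : x = castVec z := funext hz
    exact ⟨hxP, fun j ↦ ⟨(W *ᵥ z) j, ((Int.castRingHom ℝ).map_mulVec W z j).symm⟩⟩
  · rintro x ⟨⟨hx, hax⟩, hWx⟩
    choose y hy using hWx
    have hslice := hW x ⟨fun i ↦ (hx i).1, fun i ↦ (hx i).2⟩ y (funext hy)
    refine convexHull_mono ?_ (mem_convexHull_feasible_of_mem_slice hsep hax hslice)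
    rintro _ ⟨z, ⟨hz, haz⟩, rfl⟩
    refine ⟨⟨fun i ↦ ⟨Int.cast_nonneg (hz.1 i), ?_⟩, haz⟩, fun i ↦ ⟨z i, rfl⟩⟩
    exact (Int.cast_mono (hz.2 i)).trans_eq Int.cast_one

/-- **Every 0-1 knapsack polytope can be modeled with at most `n - 2` integrality
constraints.** For `n ≥ 4`, `a ∈ ℤⁿ`, `b ∈ ℤ` and `P = {x ∈ [0,1]ⁿ : aᵀx ≤ b}`,
there is `W ∈ ℤ^{(n-2)×n}` with `conv(P ∩ ℤⁿ) = conv {x ∈ P : Wx ∈ ℤ^{n-2}}`. -/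
theorem knapsack_upper_bound_n_minus_two_integrality_constraints
    (n : ℕ) (hn : 4 ≤ n) (a : Fin n → ℤ) (b : ℤ) :
    ∃ W : Matrix (Fin (n - 2)) (Fin n) ℤ,
      convexHull ℝ {x : Fin n → ℝ |
          ((∀ i, 0 ≤ x i ∧ x i ≤ 1) ∧ ∑ i, (a i : ℝ) * x i ≤ (b : ℝ)) ∧
          IsIntegerPoint x}
        = convexHull ℝ {x : Fin n → ℝ |
          ((∀ i, 0 ≤ x i ∧ x i ≤ 1) ∧ ∑ i, (a i : ℝ) * x i ≤ (b : ℝ)) ∧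
          (∀ j, ∃ z : ℤ, (W.map (Int.cast : ℤ → ℝ)).mulVec x j = (z : ℝ))} :=
  knapsack_upper_bound_n_minus_two_integrality_constraints_general n hn (fun i ↦ a i) b
end
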